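/- arXiv:1807.09000 — 9 statements merged into one kernel-verified Lean document; each statement's English description precedes it below -/
import Mathlib

section
/- Theorem 1 (occlusion-sensitive speakers prefer more specific utterances). Let u₀ be more specific than u₁ (E_{u₀} ⊊ E_{u₁}), let o^t ∈ C be the target with ℒ u₀ o^t = 1 and ℒ u₁ o^t = 1, let P be a hidden-object prior such that every object o with P(o) > 0 satisfies o ∈ C or ℒ u₀ o = 0, and suppose there exists an object o* ∉ C with ℒ u₁ o* = 1, ℒ u₀ o* = 0, and P(o*) > 0. Then for every α > 0 and every cost function, S_asym(u₀)/S_asym(u₁) > S_ego(u₀)/S_ego(u₁). -/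
open Finset Real

noncomputable section

/-- Literal listener: `L0 ℒ C u o = ℒ u o / ∑ o' ∈ C, ℒ u o'`. -/
def L0 {O 𝒰 : Type*} (ℒ : 𝒰 → O → ℝ) (C : Finset O) (u : 𝒰) (o : O) : ℝ :=
  ℒ u o / ∑ o' ∈ C, ℒ u o'

/-- Egocentric utility. -/
def Uego {O 𝒰 : Type*} (ℒ : 𝒰 → O → ℝ) (C : Finset O) (oT : O) (cost : 𝒰 → ℝ) (u : 𝒰) : ℝ :=
  Real.log (L0 ℒ C u oT) - cost u

/-- Asymmetric (occlusion-sensitive) utility. -/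
def Uasym {O 𝒰 : Type*} [DecidableEq O] [Fintype O] (ℒ : 𝒰 → O → ℝ) (C : Finset O) (oT : O)
    (P : O → ℝ) (cost : 𝒰 → ℝ) (u : 𝒰) : ℝ :=
  (∑ oh : O, P oh * Real.log (L0 ℒ (insert oh C) u oT)) - cost u

/-- Softmax distribution over utterances. -/
def softmax {𝒰 : Type*} [Fintype 𝒰] (α : ℝ) (U : 𝒰 → ℝ) (u : 𝒰) : ℝ :=
  Real.exp (α * U u) / ∑ u' : 𝒰, Real.exp (α * U u')

theorem softmax_ratio {𝒰 : Type*} [Fintype 𝒰] [Nonempty 𝒰] (α : ℝ) (U : 𝒰 → ℝ) (u v : 𝒰) :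
    softmax α U u / softmax α U v = Real.exp (α * (U u - U v)) := by
  have hZ : (∑ u' : 𝒰, Real.exp (α * U u')) ≠ 0 :=
    (Finset.sum_pos (fun _ _ => Real.exp_pos _) Finset.univ_nonempty).ne'
  unfold softmax
  rw [div_div_div_cancel_right₀ hZ, ← Real.exp_sub, mul_sub]

/-- Theorem 1: occlusion-sensitive speakers prefer more specific utterances. -/
theorem occlusion_sensitive_prefers_specific
    {O 𝒰 : Type*} [DecidableEq O] [Fintype O] [Fintype 𝒰] [Nonempty 𝒰]
    (ℒ : 𝒰 → O → ℝ) (hL : ∀ u o, ℒ u o = 0 ∨ ℒ u o = 1)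
    (u₀ u₁ : 𝒰) (hspec : {o : O | ℒ u₀ o = 1} ⊂ {o : O | ℒ u₁ o = 1})
    (C : Finset O) (oT : O) (hoT : oT ∈ C)
    (h0 : ℒ u₀ oT = 1) (h1 : ℒ u₁ oT = 1)
    (P : O → ℝ) (hP : ∀ o, 0 ≤ P o) (hPsum : ∑ o : O, P o = 1)
    (hPsupp : ∀ o, 0 < P o → o ∈ C ∨ ℒ u₀ o = 0)
    (hstar : ∃ os, os ∉ C ∧ ℒ u₁ os = 1 ∧ ℒ u₀ os = 0 ∧ 0 < P os)
    (α : ℝ) (hα : 0 < α) (cost : 𝒰 → ℝ) :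
    softmax α (Uasym ℒ C oT P cost) u₀ / softmax α (Uasym ℒ C oT P cost) u₁ >
      softmax α (Uego ℒ C oT cost) u₀ / softmax α (Uego ℒ C oT cost) u₁ := by
  obtain ⟨os, hosC, hos1, hos0, hPos⟩ := hstar
  have hnn : ∀ u o, 0 ≤ ℒ u o := fun u o => by
    rcases hL u o with h | h <;> simp [h]
  have hS : ∀ u, ℒ u oT = 1 → 0 < ∑ o ∈ C, ℒ u o := fun u hu =>
    Finset.sum_pos' (fun o _ => hnn u o) ⟨oT, hoT, by rw [hu]; exact one_pos⟩
  have hins : ∀ u oh, ∑ o ∈ C, ℒ u o ≤ ∑ o ∈ insert oh C, ℒ u o := fun u oh =>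
    Finset.sum_le_sum_of_subset_of_nonneg (Finset.subset_insert _ _) (fun o _ _ => hnn u o)
  have e0 : Uasym ℒ C oT P cost u₀ = Uego ℒ C oT cost u₀ := by
    unfold Uasym Uego
    have : ∀ oh ∈ (Finset.univ : Finset O), P oh * Real.log (L0 ℒ (insert oh C) u₀ oT) =
        P oh * Real.log (L0 ℒ C u₀ oT) := by
      intro oh _
      rcases (hP oh).eq_or_lt with h | h
      · simp [← h]
      · by_cases hc : oh ∈ C
        · rw [Finset.insert_eq_of_mem hc]
        · have hz := (hPsupp oh h).resolve_left hc
          unfold L0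
          rw [Finset.sum_insert hc, hz, zero_add]
    rw [Finset.sum_congr rfl this, ← Finset.sum_mul, hPsum, one_mul]
  have e1 : Uasym ℒ C oT P cost u₁ < Uego ℒ C oT cost u₁ := by
    unfold Uasym Uego
    have key : ∑ oh : O, P oh * Real.log (L0 ℒ (insert oh C) u₁ oT) <
        ∑ oh : O, P oh * Real.log (L0 ℒ C u₁ oT) := by
      have hpos := hS u₁ h1
      apply Finset.sum_lt_sum
      · intro oh _
        apply mul_le_mul_of_nonneg_left _ (hP oh)
        unfold L0
        rw [h1]
        exact Real.log_le_log (one_div_pos.mpr (hpos.trans_le (hins u₁ oh)))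
          (one_div_le_one_div_of_le hpos (hins u₁ oh))
      · refine ⟨os, Finset.mem_univ _, ?_⟩
        apply mul_lt_mul_of_pos_left _ hPos
        have hlt : ∑ o ∈ C, ℒ u₁ o < ∑ o ∈ insert os C, ℒ u₁ o := by
          rw [Finset.sum_insert hosC, hos1]; linarith
        unfold L0
        rw [h1]
        exact Real.log_lt_log (one_div_pos.mpr (hpos.trans hlt))
          (one_div_lt_one_div_of_lt hpos hlt)
    rw [← Finset.sum_mul, hPsum, one_mul] at key
    linarith
  rw [softmax_ratio, softmax_ratio, e0, gt_iff_lt, Real.exp_lt_exp]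
  exact mul_lt_mul_of_pos_left (by linarith) hα

end
end

section
/- Utility-difference form of Theorem 1. Let u₀ be more specific than u₁ (E_{u₀} ⊊ E_{u₁}), let o^t ∈ C be the target with ℒ u₀ o^t = 1 and ℒ u₁ o^t = 1, let P be a hidden-object prior such that every object o with P(o) > 0 satisfies o ∈ C or ℒ u₀ o = 0, and suppose there exists an object o* ∉ C with ℒ u₁ o* = 1, ℒ u₀ o* = 0, and P(o*) > 0. Then ∑_{o_h : O} P(o_h)·(log L₀(o^t | u₀, C ∪ {o_h}) − log L₀(o^t | u₁, C ∪ {o_h})) > log L₀(o^t | u₀, C) − log L₀(o^t | u₁, C). -/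
open Finset Real

noncomputable section

/-- Utility-difference form of Theorem 1. -/
theorem asym_utility_difference_gt_ego
    {O 𝒰 : Type*} [DecidableEq O] [Fintype O]
    (ℒ : 𝒰 → O → ℝ) (hL : ∀ u o, ℒ u o = 0 ∨ ℒ u o = 1)
    (u₀ u₁ : 𝒰) (hspec : {o : O | ℒ u₀ o = 1} ⊂ {o : O | ℒ u₁ o = 1})
    (C : Finset O) (oT : O) (hoT : oT ∈ C)
    (h0 : ℒ u₀ oT = 1) (h1 : ℒ u₁ oT = 1)
    (P : O → ℝ) (hP : ∀ o, 0 ≤ P o) (hPsum : ∑ o : O, P o = 1)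
    (hPsupp : ∀ o, 0 < P o → o ∈ C ∨ ℒ u₀ o = 0)
    (hstar : ∃ os, os ∉ C ∧ ℒ u₁ os = 1 ∧ ℒ u₀ os = 0 ∧ 0 < P os) :
    (∑ oh : O, P oh *
        (Real.log (L0 ℒ (insert oh C) u₀ oT) - Real.log (L0 ℒ (insert oh C) u₁ oT))) >
      Real.log (L0 ℒ C u₀ oT) - Real.log (L0 ℒ C u₁ oT) := by
  have nn : ∀ u o, 0 ≤ ℒ u o := fun u o => by rcases hL u o with h | h <;> rw [h] <;> norm_num
  have hlog : ∀ (u : 𝒰) (D : Finset O), ℒ u oT = 1 →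
      Real.log (L0 ℒ D u oT) = - Real.log (∑ o' ∈ D, ℒ u o') := by
    intro u D h
    unfold L0
    rw [h, one_div, Real.log_inv]
  have hpos : ∀ u, ℒ u oT = 1 → 0 < ∑ o' ∈ C, ℒ u o' := by
    intro u h
    have := Finset.single_le_sum (f := ℒ u) (fun i _ => nn u i) hoT
    linarith
  have hp1 := hpos u₁ h1
  simp only [hlog u₀ _ h0, hlog u₁ _ h1]
  set a := Real.log (∑ o' ∈ C, ℒ u₀ o') with ha
  set b := Real.log (∑ o' ∈ C, ℒ u₁ o') with hb
  have hsum : -a - -b = ∑ o : O, P o * (-a - -b) := by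
    rw [← Finset.sum_mul, hPsum, one_mul]
  rw [gt_iff_lt, hsum]
  obtain ⟨os, hosC, hos1, hos0, hosP⟩ := hstar
  apply Finset.sum_lt_sum
  · intro o _
    rcases (hP o).eq_or_lt with h | h
    · simp [← h]
    · apply mul_le_mul_of_nonneg_left _ (hP o)
      by_cases hC : o ∈ C
      · rw [Finset.insert_eq_of_mem hC]
      · have h00 := (hPsupp o h).resolve_left hC
        rw [Finset.sum_insert hC, Finset.sum_insert hC, h00, zero_add, ← ha]
        have : b ≤ Real.log (ℒ u₁ o + ∑ o' ∈ C, ℒ u₁ o') :=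
          Real.log_le_log hp1 (by linarith [nn u₁ o])
        linarith
  · refine ⟨os, Finset.mem_univ _, ?_⟩
    apply mul_lt_mul_of_pos_left _ hosP
    rw [Finset.sum_insert hosC, Finset.sum_insert hosC, hos0, hos1, zero_add, ← ha]
    have : b < Real.log (1 + ∑ o' ∈ C, ℒ u₁ o') :=
      Real.log_lt_log hp1 (by linarith)
    linarith

end
end

section
/- Strict per-hidden-object lemma. Let u₀ and u₁ be utterances, o^t ∈ C a target with ℒ u₀ o^t = 1 and ℒ u₁ o^t = 1, and let o* be an object with o* ∉ C, ℒ u₁ o* = 1, and ℒ u₀ o* = 0. Then L₀(o^t | u₀, C ∪ {o*}) / L₀(o^t | u₁, C ∪ {o*}) > L₀(o^t | u₀, C) / L₀(o^t | u₁, C); that is, adding to the context a hidden object that matches only the less specific utterance strictly increases the literal listener's relative preference for the target under the more specific utterance. -/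
open Finset Real

noncomputable section

/-- Strict per-hidden-object lemma. -/
theorem listener_ratio_strict_increase
    {O 𝒰 : Type*} [DecidableEq O]
    (ℒ : 𝒰 → O → ℝ) (hL : ∀ u o, ℒ u o = 0 ∨ ℒ u o = 1)
    (u₀ u₁ : 𝒰) (C : Finset O) (oT : O) (hoT : oT ∈ C)
    (h0 : ℒ u₀ oT = 1) (h1 : ℒ u₁ oT = 1)
    (os : O) (hos : os ∉ C) (hos1 : ℒ u₁ os = 1) (hos0 : ℒ u₀ os = 0) :
    L0 ℒ (insert os C) u₀ oT / L0 ℒ (insert os C) u₁ oT >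
      L0 ℒ C u₀ oT / L0 ℒ C u₁ oT := by
  have hpos : 0 < ∑ o' ∈ C, ℒ u₀ o' := by
    refine Finset.sum_pos' (fun i _ => ?_) ⟨oT, hoT, by rw [h0]; norm_num⟩
    rcases hL u₀ i with h | h <;> rw [h] <;> norm_num
  unfold L0
  rw [Finset.sum_insert hos, Finset.sum_insert hos, h0, h1, hos1, hos0, zero_add]
  simp only [one_div, div_inv_eq_mul, gt_iff_lt]
  exact mul_lt_mul_of_pos_left (by linarith) (inv_pos.mpr hpos)

end
end

section
/- Uncertainty never helps the speaker. Let u be an utterance, C a finset of objects, o^t ∈ C a target with ℒ u o^t = 1, P a hidden-object prior, and cost : 𝒰 → ℝ a cost function. Then U_asym(u) ≤ U_ego(u); that is, the expected log-probability of the target under uncertainty about a hidden object is at most its log-probability in the shared context. -/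
open Finset Real

noncomputable section

/-- Uncertainty never helps the speaker: `Uasym ≤ Uego`. -/
theorem Uasym_le_Uego
    {O 𝒰 : Type*} [DecidableEq O] [Fintype O]
    (ℒ : 𝒰 → O → ℝ) (hL : ∀ u o, ℒ u o = 0 ∨ ℒ u o = 1)
    (u : 𝒰) (C : Finset O) (oT : O) (hoT : oT ∈ C) (ht : ℒ u oT = 1)
    (P : O → ℝ) (hP : ∀ o, 0 ≤ P o) (hPsum : ∑ o : O, P o = 1)
    (cost : 𝒰 → ℝ) :
    Uasym ℒ C oT P cost u ≤ Uego ℒ C oT cost u := by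
  have h0 : ∀ o, 0 ≤ ℒ u o := fun o => by
    rcases hL u o with h | h <;> rw [h] <;> norm_num
  have hpos : ∀ D : Finset O, oT ∈ D → 0 < ∑ o ∈ D, ℒ u o := fun D hD =>
    Finset.sum_pos' (fun o _ => h0 o) ⟨oT, hD, by rw [ht]; norm_num⟩
  have hlog : ∀ oh, Real.log (L0 ℒ (insert oh C) u oT) ≤ Real.log (L0 ℒ C u oT) := by
    intro oh
    have h1 := hpos C hoT
    have h2 := hpos (insert oh C) (Finset.mem_insert_of_mem hoT)
    have h3 : ∑ o ∈ C, ℒ u o ≤ ∑ o ∈ insert oh C, ℒ u o :=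
      Finset.sum_le_sum_of_subset_of_nonneg (Finset.subset_insert _ _) (fun o _ _ => h0 o)
    unfold L0
    rw [ht]
    exact Real.log_le_log (by positivity) (one_div_le_one_div_of_le h1 h3)
  have hsum : ∑ oh : O, P oh * Real.log (L0 ℒ (insert oh C) u oT) ≤ Real.log (L0 ℒ C u oT) := by
    calc _ ≤ ∑ oh : O, P oh * Real.log (L0 ℒ C u oT) :=
          Finset.sum_le_sum fun oh _ => mul_le_mul_of_nonneg_left (hlog oh) (hP oh)
      _ = _ := by rw [← Finset.sum_mul, hPsum, one_mul]
  unfold Uasym Uego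
  linarith

end
end

section
/- Mixture corollary. Let u₀ be more specific than u₁ (E_{u₀} ⊊ E_{u₁}), let o^t ∈ C be the target with ℒ u₀ o^t = 1 and ℒ u₁ o^t = 1, let P be a hidden-object prior such that every object o with P(o) > 0 satisfies o ∈ C or ℒ u₀ o = 0, and suppose there exists an object o* ∉ C with ℒ u₁ o* = 1, ℒ u₀ o* = 0, and P(o*) > 0. Then for every mixture weight w with 0 < w ≤ 1, the mixture utility U_mix(u) = w·U_asym(u) + (1 − w)·U_ego(u) satisfies U_mix(u₀) − U_mix(u₁) > U_ego(u₀) − U_ego(u₁); that is, any speaker placing positive weight on the asymmetric utility prefers the more specific utterance strictly more than a purely egocentric speaker. -/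
open Finset Real

noncomputable section

/-- Mixture corollary: any positive weight on the asymmetric utility strictly
increases the preference for the more specific utterance. -/
theorem mixture_prefers_specific
    {O 𝒰 : Type*} [DecidableEq O] [Fintype O]
    (ℒ : 𝒰 → O → ℝ) (hL : ∀ u o, ℒ u o = 0 ∨ ℒ u o = 1)
    (u₀ u₁ : 𝒰) (hspec : {o : O | ℒ u₀ o = 1} ⊂ {o : O | ℒ u₁ o = 1})
    (C : Finset O) (oT : O) (hoT : oT ∈ C)
    (h0 : ℒ u₀ oT = 1) (h1 : ℒ u₁ oT = 1)
    (P : O → ℝ) (hP : ∀ o, 0 ≤ P o) (hPsum : ∑ o : O, P o = 1)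
    (hPsupp : ∀ o, 0 < P o → o ∈ C ∨ ℒ u₀ o = 0)
    (hstar : ∃ os, os ∉ C ∧ ℒ u₁ os = 1 ∧ ℒ u₀ os = 0 ∧ 0 < P os)
    (cost : 𝒰 → ℝ) (w : ℝ) (hw0 : 0 < w) (hw1 : w ≤ 1) :
    (w * Uasym ℒ C oT P cost u₀ + (1 - w) * Uego ℒ C oT cost u₀) -
        (w * Uasym ℒ C oT P cost u₁ + (1 - w) * Uego ℒ C oT cost u₁) >
      Uego ℒ C oT cost u₀ - Uego ℒ C oT cost u₁ := by
  have hnn : ∀ u o, 0 ≤ ℒ u o := by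
    intro u o
    rcases hL u o with h | h <;> rw [h]
    exact zero_le_one
  have hpos : ∀ u, ℒ u oT = 1 → 0 < ∑ o' ∈ C, ℒ u o' := by
    intro u hu
    have := Finset.single_le_sum (f := fun o => ℒ u o) (fun i _ => hnn u i) hoT
    simp only [hu] at this
    linarith
  have e0 : ∑ oh : O, P oh * Real.log (L0 ℒ (insert oh C) u₀ oT) = Real.log (L0 ℒ C u₀ oT) := by
    rw [← one_mul (Real.log (L0 ℒ C u₀ oT)), ← hPsum, Finset.sum_mul]
    refine Finset.sum_congr rfl fun oh _ => ?_
    rcases (hP oh).eq_or_lt with h | h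
    · rw [← h]; simp
    · by_cases hc : oh ∈ C
      · rw [Finset.insert_eq_of_mem hc]
      · have hz := (hPsupp oh h).resolve_left hc
        simp only [L0]
        rw [Finset.sum_insert hc, hz, zero_add]
  have e1 : ∑ oh : O, P oh * Real.log (L0 ℒ (insert oh C) u₁ oT) < Real.log (L0 ℒ C u₁ oT) := by
    rw [← one_mul (Real.log (L0 ℒ C u₁ oT)), ← hPsum, Finset.sum_mul]
    have hS := hpos u₁ h1
    refine Finset.sum_lt_sum (fun oh _ => ?_) ?_
    · refine mul_le_mul_of_nonneg_left ?_ (hP oh)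
      by_cases hc : oh ∈ C
      · rw [Finset.insert_eq_of_mem hc]
      · have hn := hnn u₁ oh
        simp only [L0, h1]
        rw [Finset.sum_insert hc]
        refine Real.log_le_log (by positivity) ?_
        exact one_div_le_one_div_of_le hS (by linarith)
    · obtain ⟨os, hc, ho1, _, hp⟩ := hstar
      refine ⟨os, Finset.mem_univ _, mul_lt_mul_of_pos_left ?_ hp⟩
      simp only [L0, h1]
      rw [Finset.sum_insert hc, ho1]
      refine Real.log_lt_log (by positivity) ?_
      exact one_div_lt_one_div_of_lt hS (by linarith)
  simp only [Uasym, Uego]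
  rw [e0]
  have := mul_lt_mul_of_pos_left e1 hw0
  linarith

end
end

section
/- Weak specificity lemma for the literal listener. Let u₀ and u₁ be utterances with E_{u₀} ⊆ E_{u₁}, let C be a finset of objects, and let o^t ∈ C be a target with ℒ u₀ o^t = 1 and ℒ u₁ o^t = 1. Then L₀(o^t | u₀, C) ≥ L₀(o^t | u₁, C); that is, among utterances true of the target, a more specific utterance never gives the literal listener a lower probability of selecting the target. -/
open Finset Real

noncomputable section

theorem listener_le_of_more_specific
    {O 𝒰 : Type*}
    (ℒ : 𝒰 → O → ℝ) (hL : ∀ u o, ℒ u o = 0 ∨ ℒ u o = 1)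
    (u₀ u₁ : 𝒰) (hspec : {o : O | ℒ u₀ o = 1} ⊆ {o : O | ℒ u₁ o = 1})
    (C : Finset O) (oT : O) (hoT : oT ∈ C)
    (h0 : ℒ u₀ oT = 1) (h1 : ℒ u₁ oT = 1) :
    L0 ℒ C u₀ oT ≥ L0 ℒ C u₁ oT := by
  have hnn : ∀ u o, 0 ≤ ℒ u o := fun u o => by
    rcases hL u o with h | h <;> simp [h]
  have hpos : 0 < ∑ o' ∈ C, ℒ u₀ o' :=
    Finset.sum_pos' (fun o _ => hnn u₀ o) ⟨oT, hoT, by simp [h0]⟩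
  have hle : ∑ o' ∈ C, ℒ u₀ o' ≤ ∑ o' ∈ C, ℒ u₁ o' := by
    refine Finset.sum_le_sum fun o _ => ?_
    rcases hL u₀ o with h | h
    · rw [h]; exact hnn u₁ o
    · have h' : ℒ u₁ o = 1 := hspec h
      rw [h, h']
  unfold L0
  rw [h0, h1]
  exact one_div_le_one_div_of_le hpos hle

end
end

section
/- Weak (non-strict) form of Theorem 1. Let u₀ be more specific than u₁ (E_{u₀} ⊊ E_{u₁}), let o^t ∈ C be the target with ℒ u₀ o^t = 1 and ℒ u₁ o^t = 1, and let P be a hidden-object prior such that every object o with P(o) > 0 satisfies o ∈ C or ℒ u₀ o = 0. Then ∑_{o_h : O} P(o_h)·(log L₀(o^t | u₀, C ∪ {o_h}) − log L₀(o^t | u₁, C ∪ {o_h})) ≥ log L₀(o^t | u₀, C) − log L₀(o^t | u₁, C). -/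
open Finset Real

noncomputable section

/-- Weak (non-strict) form of Theorem 1. -/
theorem asym_utility_difference_ge_ego
    {O 𝒰 : Type*} [DecidableEq O] [Fintype O]
    (ℒ : 𝒰 → O → ℝ) (hL : ∀ u o, ℒ u o = 0 ∨ ℒ u o = 1)
    (u₀ u₁ : 𝒰) (hspec : {o : O | ℒ u₀ o = 1} ⊂ {o : O | ℒ u₁ o = 1})
    (C : Finset O) (oT : O) (hoT : oT ∈ C)
    (h0 : ℒ u₀ oT = 1) (h1 : ℒ u₁ oT = 1)
    (P : O → ℝ) (hP : ∀ o, 0 ≤ P o) (hPsum : ∑ o : O, P o = 1)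
    (hPsupp : ∀ o, 0 < P o → o ∈ C ∨ ℒ u₀ o = 0) :
    (∑ oh : O, P oh *
        (Real.log (L0 ℒ (insert oh C) u₀ oT) - Real.log (L0 ℒ (insert oh C) u₁ oT))) ≥
      Real.log (L0 ℒ C u₀ oT) - Real.log (L0 ℒ C u₁ oT) := by
  have hpos : 0 < ∑ o' ∈ C, ℒ u₁ o' := by
    have h := Finset.single_le_sum (f := ℒ u₁) (s := C)
      (fun i _ => by rcases hL u₁ i with h | h <;> simp [h]) hoT
    rw [h1] at h
    linarith
  have key : ∀ oh : O, P oh * (Real.log (L0 ℒ C u₀ oT) - Real.log (L0 ℒ C u₁ oT)) ≤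
      P oh * (Real.log (L0 ℒ (insert oh C) u₀ oT) - Real.log (L0 ℒ (insert oh C) u₁ oT)) := by
    intro oh
    rcases (hP oh).eq_or_lt with hz | hp
    · simp [← hz]
    refine mul_le_mul_of_nonneg_left ?_ hp.le
    by_cases hC : oh ∈ C
    · rw [Finset.insert_eq_of_mem hC]
    have hz : ℒ u₀ oh = 0 := (hPsupp oh hp).resolve_left hC
    have hn : 0 ≤ ℒ u₁ oh := by rcases hL u₁ oh with h | h <;> simp [h]
    unfold L0
    rw [Finset.sum_insert hC, Finset.sum_insert hC, hz, zero_add, h1]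
    have : Real.log (1 / (ℒ u₁ oh + ∑ o' ∈ C, ℒ u₁ o')) ≤
        Real.log (1 / ∑ o' ∈ C, ℒ u₁ o') := by
      apply Real.log_le_log (by positivity)
      exact one_div_le_one_div_of_le hpos (by linarith)
    linarith
  have hs := Finset.sum_le_sum (s := Finset.univ) (fun oh _ => key oh)
  rw [← Finset.sum_mul, hPsum, one_mul] at hs
  exact hs

end
end

section
/- Equality of utilities under an irrelevant hidden-object prior. Let u be an utterance, C a finset of objects, o^t ∈ C a target with ℒ u o^t = 1, cost : 𝒰 → ℝ a cost function, and P a hidden-object prior such that every object o with P(o) > 0 satisfies o ∈ C or ℒ u o = 0. Then U_asym(u) = U_ego(u); that is, when no possible hidden object outside the shared context can match the utterance, the asymmetric utility coincides with the egocentric utility. -/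
open Finset Real

noncomputable section

/-- Equality of utilities under an irrelevant hidden-object prior. -/
theorem Uasym_eq_Uego_of_irrelevant_prior
    {O 𝒰 : Type*} [DecidableEq O] [Fintype O]
    (ℒ : 𝒰 → O → ℝ) (hL : ∀ u o, ℒ u o = 0 ∨ ℒ u o = 1)
    (u : 𝒰) (C : Finset O) (oT : O) (hoT : oT ∈ C) (ht : ℒ u oT = 1)
    (cost : 𝒰 → ℝ)
    (P : O → ℝ) (hP : ∀ o, 0 ≤ P o) (hPsum : ∑ o : O, P o = 1)
    (hPsupp : ∀ o, 0 < P o → o ∈ C ∨ ℒ u o = 0) :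
    Uasym ℒ C oT P cost u = Uego ℒ C oT cost u := by
  have h : ∀ oh ∈ (Finset.univ : Finset O),
      P oh * Real.log (L0 ℒ (insert oh C) u oT) = P oh * Real.log (L0 ℒ C u oT) := by
    intro oh _
    rcases (hP oh).eq_or_lt with h0 | hpos
    · rw [← h0, zero_mul, zero_mul]
    · have hs : ∑ o' ∈ insert oh C, ℒ u o' = ∑ o' ∈ C, ℒ u o' := by
        by_cases hm : oh ∈ C
        · rw [Finset.insert_eq_of_mem hm]
        · rw [Finset.sum_insert hm, (hPsupp oh hpos).resolve_left hm, zero_add]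
      unfold L0
      rw [hs]
  unfold Uasym Uego
  rw [Finset.sum_congr rfl h, ← Finset.sum_mul, hPsum, one_mul]

end
end

section
/- Corollary for a uniquely identifying description. Suppose E_{u₀} = {o^t} (utterance u₀ is true of the target o^t and of no other possible object), E_{u₀} ⊊ E_{u₁}, o^t ∈ C, ℒ u₁ o^t = 1, and P is a hidden-object prior for which there exists an object o* ∉ C with ℒ u₁ o* = 1 and P(o*) > 0. Then ∑_{o_h : O} P(o_h)·(log L₀(o^t | u₀, C ∪ {o_h}) − log L₀(o^t | u₁, C ∪ {o_h})) > log L₀(o^t | u₀, C) − log L₀(o^t | u₁, C); that is, relative to the egocentric utility, the asymmetric utility strictly favors a fully distinguishing description over a less specific one. -/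
open Finset Real

noncomputable section

/-- Corollary for a uniquely identifying description. -/
theorem asym_favors_unique_description
    {O 𝒰 : Type*} [DecidableEq O] [Fintype O]
    (ℒ : 𝒰 → O → ℝ) (hL : ∀ u o, ℒ u o = 0 ∨ ℒ u o = 1)
    (u₀ u₁ : 𝒰) (oT : O)
    (huniq : {o : O | ℒ u₀ o = 1} = {oT})
    (hspec : {o : O | ℒ u₀ o = 1} ⊂ {o : O | ℒ u₁ o = 1})
    (C : Finset O) (hoT : oT ∈ C) (h1 : ℒ u₁ oT = 1)
    (P : O → ℝ) (hP : ∀ o, 0 ≤ P o) (hPsum : ∑ o : O, P o = 1)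
    (hstar : ∃ os, os ∉ C ∧ ℒ u₁ os = 1 ∧ 0 < P os) :
    (∑ oh : O, P oh *
        (Real.log (L0 ℒ (insert oh C) u₀ oT) - Real.log (L0 ℒ (insert oh C) u₁ oT))) >
      Real.log (L0 ℒ C u₀ oT) - Real.log (L0 ℒ C u₁ oT) := by
  have hu : ∀ o, ℒ u₀ o = if o = oT then 1 else 0 := by
    intro o
    have h : o ∈ {o : O | ℒ u₀ o = 1} ↔ o ∈ ({oT} : Set O) := by rw [huniq]
    simp only [Set.mem_setOf_eq, Set.mem_singleton_iff] at h
    split_ifs with ho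
    · exact h.2 ho
    · exact (hL u₀ o).resolve_right (fun hh => ho (h.1 hh))
  have hnn : ∀ o, 0 ≤ ℒ u₁ o := by
    intro o
    rcases hL u₁ o with h | h <;> rw [h] <;> norm_num
  have key : ∀ D : Finset O, oT ∈ D →
      Real.log (L0 ℒ D u₀ oT) - Real.log (L0 ℒ D u₁ oT) = Real.log (∑ o ∈ D, ℒ u₁ o) := by
    intro D hD
    simp [L0, hu, hD, h1]
  have hpos : 0 < ∑ o ∈ C, ℒ u₁ o :=
    Finset.sum_pos' (fun o _ => hnn o) ⟨oT, hoT, by rw [h1]; norm_num⟩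
  rw [key C hoT]
  have e : ∀ oh, Real.log (L0 ℒ (insert oh C) u₀ oT) - Real.log (L0 ℒ (insert oh C) u₁ oT)
      = Real.log (∑ o ∈ insert oh C, ℒ u₁ o) := fun oh => key _ (Finset.mem_insert_of_mem hoT)
  simp only [e]
  have hR : Real.log (∑ o ∈ C, ℒ u₁ o) = ∑ oh : O, P oh * Real.log (∑ o ∈ C, ℒ u₁ o) := by
    rw [← Finset.sum_mul, hPsum, one_mul]
  rw [hR, gt_iff_lt]
  obtain ⟨os, hos, hos1, hPos⟩ := hstar
  apply Finset.sum_lt_sum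
  · intro oh _
    apply mul_le_mul_of_nonneg_left _ (hP oh)
    apply Real.log_le_log hpos
    exact Finset.sum_le_sum_of_subset_of_nonneg (Finset.subset_insert _ _) (fun o _ _ => hnn o)
  · refine ⟨os, Finset.mem_univ _, ?_⟩
    apply mul_lt_mul_of_pos_left _ hPos
    apply Real.log_lt_log hpos
    rw [Finset.sum_insert hos, hos1]
    linarith

end
end
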